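/- Let σ be a signature and 𝐃 a σ-structure. Define the partition (P,Q) of 𝐃 as follows: P places two elements d₁, d₂ of D in the same class if Hom(𝐓,t;𝐃,d₁) = Hom(𝐓,t;𝐃,d₂) for every rooted ftree (𝐓,t); Q places two constraints R₁(𝐝₁), R₂(𝐝₂) of 𝒞_𝐃 in the same class if R₁ = R₂, for all s, s' ∈ [arity(R₁)] one has 𝐝₁[s] = 𝐝₁[s'] iff 𝐝₂[s] = 𝐝₂[s'], and for every s ∈ [arity(R₁)] the elements 𝐝₁[s] and 𝐝₂[s] lie in the same P-class. Then (P,Q) is an equitable partition of 𝐃. -/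

import Mathlib

attribute [local instance] Classical.propDecidable

set_option maxHeartbeats 1000000

noncomputable section

/-- A relational structure over the signature given by symbols `σ` with arities `ar`,
with universe `A`: for each relation symbol, a set of tuples. -/
structure Struct (σ : Type) (ar : σ → ℕ) (A : Type) : Type where
  rel : ∀ R : σ, Set (Fin (ar R) → A)

variable {σ : Type} {ar : σ → ℕ}

/-- The set of constraints of a structure: pairs `(R, 𝐚)` with `𝐚 ∈ R(AA)`. -/
def Cons {A : Type} (AA : Struct σ ar A) : Type :=
  Σ R : σ, {u : Fin (ar R) → A // u ∈ AA.rel R}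

instance Cons.finite {A : Type} [Finite σ] [Finite A] {AA : Struct σ ar A} :
    Finite (Cons AA) :=
  inferInstanceAs (Finite (Σ R : σ, {u : Fin (ar R) → A // u ∈ AA.rel R}))

noncomputable instance Cons.fintype {A : Type} [Fintype σ] [Fintype A] {AA : Struct σ ar A} :
    Fintype (Cons AA) := Fintype.ofFinite _

/-- Labels `(S, R)` with `R ∈ σ` and `S ⊆ [arity R]`. -/
abbrev Label (σ : Type) (ar : σ → ℕ) : Type := Σ R : σ, Finset (Fin (ar R))

/-- The entry of the matrix representation `M_AA` of a structure at `(a, R(𝐚))`: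
the label `(S, R)` with `S = {i : 𝐚[i] = a}`. -/
def lab {A : Type} (AA : Struct σ ar A) (a : A) (c : Cons AA) : Label σ ar :=
  ⟨c.1, Finset.univ.filter fun i => c.2.1 i = a⟩

/-- The 0/1 matrix `M_AA^ℓ`. -/
def labMat {A : Type} (AA : Struct σ ar A) (ℓ : Label σ ar) : Matrix A (Cons AA) ℝ :=
  fun a c => if lab AA a c = ℓ then 1 else 0

/-- A doubly stochastic matrix: non-negative entries, all rows and all columns sum to 1. -/
def IsDoublyStochastic {α β : Type} [Fintype α] [Fintype β] (X : Matrix α β ℝ) : Prop :=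
  (∀ i j, 0 ≤ X i j) ∧ (∀ i, ∑ j, X i j = 1) ∧ (∀ j, ∑ i, X i j = 1)

/-- A left stochastic matrix: non-negative entries, all columns sum to 1. -/
def IsLeftStochastic {α β : Type} [Fintype α] (X : Matrix α β ℝ) : Prop :=
  (∀ i j, 0 ≤ X i j) ∧ (∀ j, ∑ i, X i j = 1)

/-- Fractional isomorphism: doubly stochastic `X`, `Y` with
`X M_AA^ℓ = M_BB^ℓ Y` and `M_AA^ℓ Yᵀ = Xᵀ M_BB^ℓ` for every label `ℓ`. -/
def FracIso {A B : Type} [Fintype σ] [Fintype A] [Fintype B]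
    (AA : Struct σ ar A) (BB : Struct σ ar B) : Prop :=
  ∃ (X : Matrix B A ℝ) (Y : Matrix (Cons BB) (Cons AA) ℝ),
    IsDoublyStochastic X ∧ IsDoublyStochastic Y ∧
    ∀ ℓ : Label σ ar,
      X * labMat AA ℓ = labMat BB ℓ * Y ∧
      labMat AA ℓ * Y.transpose = X.transpose * labMat BB ℓ

/-- The type of iterated degrees of depth `k`. -/
def DegT (L : Type) : ℕ → Type
  | 0 => Bool
  | k + 1 => Multiset (L × DegT L k)

/-- The iterated degree `δ_k` of an element or a constraint of a structure. -/
def iterDeg {A : Type} [Fintype σ] [Fintype A] (AA : Struct σ ar A) :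
    (k : ℕ) → A ⊕ Cons AA → DegT (Label σ ar) k
  | 0, x => x.isLeft
  | k + 1, Sum.inl a =>
      (Finset.univ.val.map fun c : Cons AA => (lab AA a c, iterDeg AA k (Sum.inr c)) :
        Multiset (Label σ ar × DegT (Label σ ar) k))
  | k + 1, Sum.inr c =>
      (Finset.univ.val.map fun a : A => (lab AA a c, iterDeg AA k (Sum.inl a)) :
        Multiset (Label σ ar × DegT (Label σ ar) k))

/-- Two structures have the same iterated degree sequence. -/
def SameIterDeg {A B : Type} [Fintype σ] [Fintype A] [Fintype B]
    (AA : Struct σ ar A) (BB : Struct σ ar B) : Prop :=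
  ∀ k : ℕ,
    Multiset.map (iterDeg AA k) (Finset.univ.val : Multiset (A ⊕ Cons AA)) =
    Multiset.map (iterDeg BB k) (Finset.univ.val : Multiset (B ⊕ Cons BB))
/-- An equitable partition of a structure, given by index maps `p` (on the universe)
and `q` (on the constraints) together with its parameters `cpar`, `dpar`. -/
def IsEquitable {A : Type} (AA : Struct σ ar A) {I : Type u} {J : Type v}
    (p : A → I) (q : Cons AA → J)
    (cpar : Label σ ar → I → J → ℕ) (dpar : Label σ ar → J → I → ℕ) : Prop :=
  (∀ (a : A) (ℓ : Label σ ar) (j : J),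
      Nat.card {c : Cons AA // q c = j ∧ lab AA a c = ℓ} = cpar ℓ (p a) j) ∧
  (∀ (c : Cons AA) (ℓ : Label σ ar) (i : I),
      Nat.card {a : A // p a = i ∧ lab AA a c = ℓ} = dpar ℓ (q c) i)

/-- Two structures have a common equitable partition: equitable partitions with the same
index sets, the same parameters, and corresponding classes of equal sizes. -/
def CommonEquitable {A B : Type} (AA : Struct σ ar A) (BB : Struct σ ar B) : Prop :=
  ∃ (I J : Type) (pA : A → I) (qA : Cons AA → J) (pB : B → I) (qB : Cons BB → J)
    (cpar : Label σ ar → I → J → ℕ) (dpar : Label σ ar → J → I → ℕ),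
    IsEquitable AA pA qA cpar dpar ∧ IsEquitable BB pB qB cpar dpar ∧
    (∀ i : I, Nat.card {a : A // pA a = i} = Nat.card {b : B // pB b = i}) ∧
    (∀ j : J, Nat.card {c : Cons AA // qA c = j} = Nat.card {c : Cons BB // qB c = j})

/-- `h` is a homomorphism from `AA` to `BB`. -/
def IsHom {A B : Type} (AA : Struct σ ar A) (BB : Struct σ ar B) (h : A → B) : Prop :=
  ∀ (R : σ) (u : Fin (ar R) → A), u ∈ AA.rel R → (fun i => h (u i)) ∈ BB.rel R

/-- The number of homomorphisms from `AA` to `BB`. -/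
def homCount {A B : Type} (AA : Struct σ ar A) (BB : Struct σ ar B) : ℕ :=
  Nat.card {h : A → B // IsHom AA BB h}

/-- The number of homomorphisms from `(TT, t)` to `(DD, d)` (with a designated element). -/
def rhomCount {T D : Type} (TT : Struct σ ar T) (t : T) (DD : Struct σ ar D) (d : D) : ℕ :=
  Nat.card {h : T → D // IsHom TT DD h ∧ h t = d}

/-- The factor graph of a structure: bipartite graph on elements and constraints. -/
def factorGraph {A : Type} (AA : Struct σ ar A) : SimpleGraph (A ⊕ Cons AA) :=
  SimpleGraph.fromRel fun x y =>
    ∃ (a : A) (c : Cons AA), x = Sum.inl a ∧ y = Sum.inr c ∧ ∃ i, c.2.1 i = a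

/-- A structure is an ftree if its factor graph is a tree. -/
def IsFtree {A : Type} (AA : Struct σ ar A) : Prop := (factorGraph AA).IsTree
/-- The set `{𝐚}` of elements occurring in the tuple of a constraint, as a Finset. -/
def tsupp {A : Type} {AA : Struct σ ar A} (c : Cons AA) : Finset A :=
  Finset.univ.image c.2.1

lemma mem_tsupp {A : Type} {AA : Struct σ ar A} (c : Cons AA) (i : Fin (ar c.1)) :
    c.2.1 i ∈ tsupp c :=
  Finset.mem_image_of_mem _ (Finset.mem_univ i)

/-- Feasibility of the system `SA^k(AA, BB)`. -/
def SAfeasible {A B : Type} [Fintype B] (k : ℕ)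
    (AA : Struct σ ar A) (BB : Struct σ ar B) : Prop :=
  ∃ (pV : (V : Finset A) → ({x // x ∈ V} → B) → ℝ)
    (pC : (c : Cons AA) → ({x // x ∈ tsupp c} → B) → ℝ),
    -- all variables take values in [0,1]
    (∀ (V : Finset A) (f : {x // x ∈ V} → B),
        V.Nonempty → V.card ≤ k → 0 ≤ pV V f ∧ pV V f ≤ 1) ∧
    (∀ (c : Cons AA) (f : {x // x ∈ tsupp c} → B), 0 ≤ pC c f ∧ pC c f ≤ 1) ∧
    -- (SA1)
    (∀ V : Finset A, V.Nonempty → V.card ≤ k →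
        ∑ f : {x // x ∈ V} → B, pV V f = 1) ∧
    -- (SA2)
    (∀ (U V : Finset A) (hUV : U ⊆ V), U.Nonempty → V.card ≤ k →
        ∀ f : {x // x ∈ U} → B,
          pV U f = ∑ g : {x // x ∈ V} → B,
            if ∀ u : {x // x ∈ U}, g ⟨u.1, hUV u.2⟩ = f u then pV V g else 0) ∧
    -- (SA3)
    (∀ (c : Cons AA) (U : Finset A) (hU : U ⊆ tsupp c), U.Nonempty → U.card ≤ k →
        ∀ f : {x // x ∈ U} → B,
          pV U f = ∑ g : {x // x ∈ tsupp c} → B,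
            if ∀ u : {x // x ∈ U}, g ⟨u.1, hU u.2⟩ = f u then pC c g else 0) ∧
    -- (SA4)
    (∀ (c : Cons AA) (f : {x // x ∈ tsupp c} → B),
        (fun i => f ⟨c.2.1 i, mem_tsupp c i⟩) ∉ BB.rel c.1 → pC c f = 0)

/-- The relation symbols of the signature `σ*_k`. -/
inductive StarSym (σ : Type) (ar : σ → ℕ) (k : ℕ) : Type
  | TS (j : Fin k) (S : Finset (Fin (j.1 + 1)))
  | TI (j j' : Fin k) (iv : Fin (j'.1 + 1) → Fin (j.1 + 1))
  | RS (R : σ) (S : Finset (Fin (ar R)))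
  | RI (R : σ) (j : Fin k) (iv : Fin (j.1 + 1) → Fin (ar R))

/-- Arities for `σ*_k`. -/
def starAr {k : ℕ} : StarSym σ ar k → ℕ
  | .TS _ _ => 1
  | .TI _ _ _ => 2
  | .RS _ _ => 1
  | .RI _ _ _ => 2

/-- The universe of `AA*_k`: all tuples of length `1 ≤ j ≤ k` together with the constraints. -/
def StarUniv {A : Type} (AA : Struct σ ar A) (k : ℕ) : Type :=
  ((j : Fin k) × (Fin (j.1 + 1) → A)) ⊕ Cons AA

instance StarUniv.finite {A : Type} [Finite σ] [Finite A] {AA : Struct σ ar A} {k : ℕ} :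
    Finite (StarUniv AA k) :=
  inferInstanceAs (Finite (((j : Fin k) × (Fin (j.1 + 1) → A)) ⊕ Cons AA))

noncomputable instance StarUniv.fintype {A : Type} [Fintype σ] [Fintype A]
    {AA : Struct σ ar A} {k : ℕ} : Fintype (StarUniv AA k) := Fintype.ofFinite _

/-- The structure `AA*_k`. -/
def starStruct {A : Type} (AA : Struct σ ar A) (k : ℕ) :
    Struct (StarSym σ ar k) starAr (StarUniv AA k) where
  rel
    | .TS j S => {u | ∃ v : Fin (j.1 + 1) → A,
        (∀ i ∈ S, ∀ i' ∈ S, v i = v i') ∧ u = fun _ => Sum.inl ⟨j, v⟩}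
    | .TI j j' iv => {u | ∃ v : Fin (j.1 + 1) → A,
        u = ![Sum.inl ⟨j, v⟩, Sum.inl ⟨j', v ∘ iv⟩]}
    | .RS R S => {u | ∃ (v : Fin (ar R) → A) (hv : v ∈ AA.rel R),
        (∀ i ∈ S, ∀ i' ∈ S, v i = v i') ∧ u = fun _ => Sum.inr ⟨R, ⟨v, hv⟩⟩}
    | .RI R j iv => {u | ∃ (v : Fin (ar R) → A) (hv : v ∈ AA.rel R),
        u = ![Sum.inr ⟨R, ⟨v, hv⟩⟩, Sum.inl ⟨j, v ∘ iv⟩]}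

/-- `AA ≡_k BB` : the structures `AA*_k` and `BB*_k` have a common equitable partition. -/
def EquivK {A B : Type} (k : ℕ) (AA : Struct σ ar A) (BB : Struct σ ar B) : Prop :=
  CommonEquitable (starStruct AA k) (starStruct BB k)

/-- A bundled σ-structure with finite universe. -/
structure FinStruct (σ : Type) (ar : σ → ℕ) : Type 1 where
  carrier : Type
  [fin : Fintype carrier]
  str : Struct σ ar carrier

/-- One step in a chain: either a homomorphism exists, or the structures are
`≡_1`-equivalent (i.e. have a common equitable partition). -/
def FStep (X Y : FinStruct σ ar) : Prop :=
  (∃ h : X.carrier → Y.carrier, IsHom X.str Y.str h) ∨ CommonEquitable X.str Y.str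

/-- The structure `AA` has treewidth `< k`: there is a tree-decomposition all of whose
bags have at most `k` elements. -/
def HasTreewidthLT {A : Type} (AA : Struct σ ar A) (k : ℕ) : Prop :=
  ∃ (V : Type) (G : SimpleGraph V) (β : V → Finset A),
    G.IsTree ∧
    (∀ c : Cons AA, ∃ v : V, ∀ i, c.2.1 i ∈ β v) ∧
    (∀ (a : A) (u v : V), a ∈ β u → a ∈ β v →
      ∀ p : G.Walk u v, p.IsPath → ∀ w ∈ p.support, a ∈ β w) ∧
    (∀ v : V, (β v).card ≤ k)
/-- The adjacency matrix of a graph (a structure with one binary relation). -/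
def adjMat {A : Type} (AA : Struct Unit (fun _ => 2) A) : Matrix A A ℝ :=
  fun a a' => if ![a, a'] ∈ AA.rel () then 1 else 0

/-- A matrix is decomposable if, up to partitioning rows and columns into two
(nontrivial) blocks, it is a direct sum. -/
def MDecomposable {V W : Type} (M : Matrix V W ℝ) : Prop :=
  ∃ (SV : Set V) (SW : Set W),
    (SV.Nonempty ∨ SW.Nonempty) ∧ (SVᶜ.Nonempty ∨ SWᶜ.Nonempty) ∧
    ∀ v w, (v ∈ SV ∧ w ∉ SW) ∨ (v ∉ SV ∧ w ∈ SW) → M v w = 0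

/-- A bundled rooted ftree. -/
structure RootedFtree (σ : Type) (ar : σ → ℕ) : Type 1 where
  carrier : Type
  [fin : Fintype carrier]
  str : Struct σ ar carrier
  isFtree : IsFtree str
  root : carrier

/-- The profile of an element: the number of homomorphisms from each rooted ftree
mapping the root to it. -/
def degProfile {D : Type} (DD : Struct σ ar D) (d : D) : RootedFtree σ ar → ℕ :=
  fun F => rhomCount F.str F.root DD d

/-- The class of a constraint: its relation symbol, its equality pattern, and the
`degProfile`-classes of its coordinates. -/
def qProfile {D : Type} (DD : Struct σ ar D) (c : Cons DD) :
    Σ R : σ, Set (Fin (ar R) × Fin (ar R)) × (Fin (ar R) → (RootedFtree σ ar → ℕ)) :=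
  ⟨c.1, ({p | c.2.1 p.1 = c.2.1 p.2}, fun s => degProfile DD (c.2.1 s))⟩

/-- Number of homomorphisms with a designated element and a designated constraint. -/
def rhomCount2 {T D : Type} (TT : Struct σ ar T) (t : T) (c : Cons TT)
    (DD : Struct σ ar D) (d : D) (c' : Cons DD) : ℕ :=
  Nat.card {h : T → D // IsHom TT DD h ∧ h t = d ∧
    (⟨c.1, fun i => h (c.2.1 i)⟩ : Σ R : σ, Fin (ar R) → D) = ⟨c'.1, c'.2.1⟩}

/-- `(t, R(𝐭))` can be mapped to `(d, R'(𝐝))`. -/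
def CanMap {T D : Type} {TT : Struct σ ar T} {DD : Struct σ ar D}
    (t : T) (c : Cons TT) (d : D) (c' : Cons DD) : Prop :=
  ∃ hR : c.1 = c'.1,
    (∀ s s' : Fin (ar c.1), c.2.1 s = c.2.1 s' →
        c'.2.1 (Fin.cast (congrArg ar hR) s) = c'.2.1 (Fin.cast (congrArg ar hR) s')) ∧
    (∀ s : Fin (ar c.1), c.2.1 s = t → c'.2.1 (Fin.cast (congrArg ar hR) s) = d)

/-- A substructure of a structure: a subset of the universe together with a subset of
the tuples of each relation, lying inside the subset. -/
structure Substr {A : Type} (AA : Struct σ ar A) : Type where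
  carrier : Set A
  srel : ∀ R : σ, Set (Fin (ar R) → A)
  srel_sub : ∀ R : σ, srel R ⊆ AA.rel R
  srel_mem : ∀ R : σ, ∀ u ∈ srel R, ∀ i, u i ∈ carrier

/-- The substructure as a structure in its own right. -/
def Substr.toStruct {A : Type} {AA : Struct σ ar A} (Q : Substr AA) :
    Struct σ ar {x // x ∈ Q.carrier} where
  rel R := {u | (fun i => (u i).1) ∈ Q.srel R}

/-- Containment of substructures. -/
def Substr.le {A : Type} {AA : Struct σ ar A} (Q Q' : Substr AA) : Prop :=
  Q.carrier ⊆ Q'.carrier ∧ ∀ R : σ, Q.srel R ⊆ Q'.srel R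

/-- A subftree of `TT` avoiding the constraint `c`, containing a unique element of the
tuple of `c`, which moreover participates in exactly one constraint of the subftree. -/
def GoodPiece {T : Type} (TT : Struct σ ar T) (c : Cons TT) (Q : Substr TT) : Prop :=
  IsFtree Q.toStruct ∧
  c.2.1 ∉ Q.srel c.1 ∧
  ∃ x ∈ Q.carrier, (∃ i, c.2.1 i = x) ∧
    (∀ y ∈ Q.carrier, (∃ i, c.2.1 i = y) → y = x) ∧
    (∃! e : Σ R : σ, {u // u ∈ Q.srel R}, ∃ i, e.2.1 i = x)

/-- The collection `TT \ c` of maximal subftrees as above. -/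
def TreeMinus {T : Type} (TT : Struct σ ar T) (c : Cons TT) : Set (Substr TT) :=
  {Q | GoodPiece TT c Q ∧ ∀ Q' : Substr TT, GoodPiece TT c Q' → Q.le Q' → Q'.le Q}

/-- The disjoint union of two structures. -/
def dUnion {A B : Type} (AA : Struct σ ar A) (BB : Struct σ ar B) :
    Struct σ ar (A ⊕ B) where
  rel R := {u | (∃ v ∈ AA.rel R, u = fun i => Sum.inl (v i)) ∨
                (∃ v ∈ BB.rel R, u = fun i => Sum.inr (v i))}

/-- Embedding of constraints of `AA` into constraints of the disjoint union. -/
def consInl {A B : Type} (AA : Struct σ ar A) (BB : Struct σ ar B) (c : Cons AA) :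
    Cons (dUnion AA BB) :=
  ⟨c.1, ⟨fun i => Sum.inl (c.2.1 i), Or.inl ⟨c.2.1, c.2.2, rfl⟩⟩⟩

/-- Embedding of constraints of `BB` into constraints of the disjoint union. -/
def consInr {A B : Type} (AA : Struct σ ar A) (BB : Struct σ ar B) (c : Cons BB) :
    Cons (dUnion AA BB) :=
  ⟨c.1, ⟨fun i => Sum.inr (c.2.1 i), Or.inr ⟨c.2.1, c.2.2, rfl⟩⟩⟩

/-- The stable-degree class of an element of the disjoint union: its full iterated
degree sequence. -/
def degPclass {A B : Type} [Fintype σ] [Fintype A] [Fintype B]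
    (AA : Struct σ ar A) (BB : Struct σ ar B) (x : A ⊕ B) :
    (k : ℕ) → DegT (Label σ ar) k :=
  fun k => iterDeg (dUnion AA BB) k (Sum.inl x)

/-- The stable-degree class of a constraint of the disjoint union. -/
def degQclass {A B : Type} [Fintype σ] [Fintype A] [Fintype B]
    (AA : Struct σ ar A) (BB : Struct σ ar B) (c : Cons (dUnion AA BB)) :
    (k : ℕ) → DegT (Label σ ar) k :=
  fun k => iterDeg (dUnion AA BB) k (Sum.inr c)
/-- The set `Y`: tuples in `(B × [m])^m` with no repeated entries, in which the copy
index of each entry is bounded by the number of occurrences of its `B`-component. -/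
def Ytype (B : Type) (m : ℕ) : Type :=
  {y : Fin m → B × Fin m // Function.Injective y ∧
    ∀ i, ((y i).2 : ℕ) + 1 ≤ Nat.card {j : Fin m // (y j).1 = (y i).1}}

/-- Permuting the coordinates of an element of `Y`. -/
def permY {B : Type} {m : ℕ} (τ : Equiv.Perm (Fin m)) (y : Ytype B m) : Ytype B m :=
  ⟨fun i => y.1 (τ i), y.2.1.comp τ.injective, fun i => by
    have h := y.2.2 (τ i)
    have hc : Nat.card {j : Fin m // (y.1 (τ j)).1 = (y.1 (τ i)).1}
        = Nat.card {j : Fin m // (y.1 j).1 = (y.1 (τ i)).1} :=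
      Nat.card_congr (τ.subtypeEquiv fun j => Iff.rfl)
    exact le_trans h (le_of_eq hc.symm)⟩

/-- The structure `X₁` from the proof of Theorem `thm:SA1`, built from a choice
function `choice` selecting a canonical element of `Y` for each multiset. -/
def X1struct {A B : Type} (AA : Struct σ ar A) (BB : Struct σ ar B) (m : ℕ)
    (choice : (Fin m → B) → Ytype B m) : Struct σ ar (A × Ytype B m) where
  rel R := {u | ∃ a : Fin (ar R) → A, a ∈ AA.rel R ∧
    ∃ tt : Fin m → Fin (ar R) → B,
      (∀ i, tt i ∈ BB.rel R) ∧
      (∀ i s s', a s = a s' → tt i s = tt i s') ∧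
      ∃ τ : Equiv.Perm (Fin m),
        u = fun s => (a s, permY τ (choice fun i => tt i s))}

/-! ### Trees and rank functions -/

lemma tree_parent_exists {V : Type} {G : SimpleGraph V} (hG : G.IsTree) (r v : V) (hv : v ≠ r) :
    ∃ w, G.Adj v w ∧ G.dist r v = G.dist r w + 1 := by
  obtain ⟨p, hp⟩ := (hG.connected v r).exists_walk_length_eq_dist
  cases p with
  | nil => exact absurd rfl hv
  | @cons _ w _ h q =>
    refine ⟨w, h, ?_⟩
    have h1 : G.dist w r ≤ q.length := SimpleGraph.dist_le q
    rw [SimpleGraph.Walk.length_cons] at hp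
    rw [SimpleGraph.dist_comm] at hp h1
    have h2 := hG.dist_eq_dist_add_one_of_adj r h
    omega

lemma tree_parent_unique {V : Type} {G : SimpleGraph V} (hG : G.IsTree) (r v w w' : V)
    (h : G.Adj v w) (h' : G.Adj v w') (hd : G.dist r v = G.dist r w + 1)
    (hd' : G.dist r v = G.dist r w' + 1) : w = w' := by
  obtain ⟨p, hp⟩ := (hG.connected r w).exists_walk_length_eq_dist
  obtain ⟨p', hp'⟩ := (hG.connected r w').exists_walk_length_eq_dist
  have e1 : (p.concat h.symm).IsPath := by
    apply SimpleGraph.Walk.isPath_of_length_eq_dist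
    rw [SimpleGraph.Walk.length_concat]; omega
  have e2 : (p'.concat h'.symm).IsPath := by
    apply SimpleGraph.Walk.isPath_of_length_eq_dist
    rw [SimpleGraph.Walk.length_concat]; omega
  have e := (hG.existsUnique_path r v).unique e1 e2
  have := congrArg (fun q => SimpleGraph.Walk.penultimate q) e
  simpa using this

lemma isTree_of_parent {V : Type} [Finite V] {G : SimpleGraph V} (hc : G.Connected) (r : V)
    (π : V → V) (h : ∀ u w, G.Adj u w → (u ≠ r ∧ w = π u) ∨ (w ≠ r ∧ u = π w)) : G.IsTree := by
  rw [SimpleGraph.isTree_iff_connected_and_card]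
  refine ⟨hc, le_antisymm ?_ hc.card_vert_le_card_edgeSet_add_one⟩
  have : Fintype V := Fintype.ofFinite V
  have hsub : G.edgeSet ⊆ (fun v => s(v, π v)) '' {v | v ≠ r} := by
    intro e
    induction e using Sym2.ind with
    | _ u w =>
      intro he
      rcases h u w he with ⟨h1, h2⟩ | ⟨h1, h2⟩
      · exact ⟨u, h1, by simp [h2]⟩
      · exact ⟨w, h1, by simp [h2, Sym2.eq_swap]⟩
  have h1 : G.edgeSet.ncard ≤ ({v | v ≠ r} : Set V).ncard :=
    (Set.ncard_le_ncard hsub (Set.toFinite _)).trans (Set.ncard_image_le (Set.toFinite _))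
  have h2 : ({v | v ≠ r} : Set V).ncard + 1 = Nat.card V := by
    have e : ({v | v ≠ r} : Set V) = ({r} : Set V)ᶜ := by ext; simp
    rw [e]
    have := Set.ncard_add_ncard_compl ({r} : Set V)
    rw [Set.ncard_singleton] at this
    omega
  rw [Nat.card_coe_set_eq]
  omega

/-- A combinatorial characterization of rooted ftrees by a rank function. -/
def RT {A : Type} (AA : Struct σ ar A) (t : A) : Prop := ∃ r : A → ℕ,
  r t = 0 ∧
  (∀ c : Cons AA, ∃ i, ∀ j, c.2.1 j = c.2.1 i ∨ r (c.2.1 i) < r (c.2.1 j)) ∧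
  (∀ a, a ≠ t → ∃ c : Cons AA, ∃ i j, c.2.1 i = a ∧ r (c.2.1 j) < r a) ∧
  (∀ (c c' : Cons AA) i j i' j', c.2.1 i = c'.2.1 i' → r (c.2.1 j) < r (c.2.1 i) →
    r (c'.2.1 j') < r (c'.2.1 i') → c = c')

lemma fg_adj_lr {A : Type} (AA : Struct σ ar A) (a : A) (c : Cons AA) :
    (factorGraph AA).Adj (Sum.inl a) (Sum.inr c) ↔ ∃ i, c.2.1 i = a := by
  simp [factorGraph, SimpleGraph.fromRel_adj, eq_comm]

lemma fg_adj_rl {A : Type} (AA : Struct σ ar A) (a : A) (c : Cons AA) :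
    (factorGraph AA).Adj (Sum.inr c) (Sum.inl a) ↔ ∃ i, c.2.1 i = a := by
  rw [SimpleGraph.adj_comm, fg_adj_lr]

lemma fg_adj_ll {A : Type} (AA : Struct σ ar A) (a b : A) :
    ¬ (factorGraph AA).Adj (Sum.inl a) (Sum.inl b) := by
  simp [factorGraph, SimpleGraph.fromRel_adj]

lemma fg_adj_rr {A : Type} (AA : Struct σ ar A) (a b : Cons AA) :
    ¬ (factorGraph AA).Adj (Sum.inr a) (Sum.inr b) := by
  simp [factorGraph, SimpleGraph.fromRel_adj]

lemma IsFtree.rt {A : Type} {AA : Struct σ ar A} (h : IsFtree AA) (t : A) : RT AA t := by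
  have hG : (factorGraph AA).IsTree := h
  set G := factorGraph AA with hGdef
  set ρ : A ⊕ Cons AA → ℕ := fun x => G.dist (Sum.inl t) x with hρ
  have hadj : ∀ (c : Cons AA) i, G.Adj (Sum.inl (c.2.1 i)) (Sum.inr c) :=
    fun c i => (fg_adj_lr AA _ c).2 ⟨i, rfl⟩
  have hpm : ∀ (c : Cons AA) i, ρ (Sum.inl (c.2.1 i)) = ρ (Sum.inr c) + 1 ∨
      ρ (Sum.inr c) = ρ (Sum.inl (c.2.1 i)) + 1 :=
    fun c i => hG.dist_eq_dist_add_one_of_adj _ (hadj c i)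
  have hcpar : ∀ c : Cons AA, ∃ i, ρ (Sum.inr c) = ρ (Sum.inl (c.2.1 i)) + 1 := by
    intro c
    obtain ⟨w, hw, hd⟩ := tree_parent_exists hG (Sum.inl t) (Sum.inr c) (by simp)
    rcases w with a | c'
    · obtain ⟨i, rfl⟩ := (fg_adj_rl AA a c).1 hw
      exact ⟨i, hd⟩
    · exact absurd hw (fg_adj_rr AA _ _)
  refine ⟨fun a => ρ (Sum.inl a), by simp [hρ], ?_, ?_, ?_⟩
  · intro c
    obtain ⟨i, hi⟩ := hcpar c
    refine ⟨i, fun j => ?_⟩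
    rcases hpm c j with h1 | h1
    · right; dsimp only; omega
    · left
      have := tree_parent_unique hG (Sum.inl t) (Sum.inr c) _ _ (hadj c j).symm (hadj c i).symm h1 hi
      simpa using this
  · intro a ha
    obtain ⟨w, hw, hd⟩ := tree_parent_exists hG (Sum.inl t) (Sum.inl a) (by simpa using ha)
    rcases w with b | c
    · exact absurd hw (fg_adj_ll AA _ _)
    · obtain ⟨i, rfl⟩ := (fg_adj_lr AA a c).1 hw
      obtain ⟨j, hj⟩ := hcpar c
      refine ⟨c, i, j, rfl, ?_⟩
      change ρ _ = ρ _ + 1 at hd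
      dsimp only; omega
  · intro c c' i j i' j' he h1 h2
    have k1 : ρ (Sum.inl (c.2.1 i)) = ρ (Sum.inr c) + 1 := by
      have := hpm c i; have := hpm c j; dsimp only at h1; omega
    have k2 : ρ (Sum.inl (c'.2.1 i')) = ρ (Sum.inr c') + 1 := by
      have := hpm c' i'; have := hpm c' j'; dsimp only at h2; omega
    have := tree_parent_unique hG (Sum.inl t) (Sum.inl (c.2.1 i)) (Sum.inr c) (Sum.inr c')
      (hadj c i) (by rw [he]; exact hadj c' i') k1 (by rw [he]; exact k2)
    simpa using this

lemma RT.isFtree {A : Type} [Finite σ] [Finite A] {AA : Struct σ ar A} {t : A} (h : RT AA t) :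
    IsFtree AA := by
  obtain ⟨r, h0, h1, h2, h3⟩ := h
  choose ip hip using h1
  choose cp ci cj hci hcj using h2
  have hadj : ∀ (c : Cons AA) i, (factorGraph AA).Adj (Sum.inl (c.2.1 i)) (Sum.inr c) :=
    fun c i => (fg_adj_lr AA _ c).2 ⟨i, rfl⟩
  have hreach : ∀ n a, r a = n → (factorGraph AA).Reachable (Sum.inl a) (Sum.inl t) := by
    intro n
    induction n using Nat.strong_induction_on with
    | _ n ih =>
      intro a ha
      by_cases hat : a = t
      · rw [hat]
      · have e1 := hadj (cp a hat) (ci a hat)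
        rw [hci a hat] at e1
        have e2 := hadj (cp a hat) (cj a hat)
        exact e1.reachable.trans (e2.symm.reachable.trans (ih _ (ha ▸ hcj a hat) _ rfl))
  have hreach' : ∀ x, (factorGraph AA).Reachable x (Sum.inl t) := by
    rintro (a | c)
    · exact hreach _ a rfl
    · exact (hadj c (ip c)).symm.reachable.trans (hreach _ _ rfl)
  have hconn : (factorGraph AA).Connected := by
    have : Nonempty (A ⊕ Cons AA) := ⟨Sum.inl t⟩
    exact ⟨fun x y => (hreach' x).trans (hreach' y).symm⟩
  have key : ∀ (c : Cons AA) i, (∃ h : c.2.1 i ≠ t, c = cp (c.2.1 i) h) ∨ c.2.1 i = c.2.1 (ip c) := by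
    intro c i
    rcases hip c i with h | h
    · exact Or.inr h
    · left
      have hne : c.2.1 i ≠ t := by
        intro e; rw [e, h0] at h; omega
      refine ⟨hne, h3 c (cp _ hne) i (ip c) (ci _ hne) (cj _ hne) (hci _ hne).symm h ?_⟩
      rw [hci _ hne]; exact hcj _ hne
  refine isTree_of_parent hconn (Sum.inl t)
    (Sum.elim (fun a => if h : a ≠ t then Sum.inr (cp a h) else Sum.inl a) (fun c => Sum.inl (c.2.1 (ip c)))) ?_
  rintro (a | c) (b | c') hab
  · exact absurd hab (fg_adj_ll AA _ _)
  · obtain ⟨i, rfl⟩ := (fg_adj_lr AA a c').1 hab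
    rcases key c' i with ⟨h, h'⟩ | h
    · left; exact ⟨by simpa using h, by simpa [h] using h'⟩
    · right; simpa using h
  · obtain ⟨i, rfl⟩ := (fg_adj_rl AA b c).1 hab
    rcases key c i with ⟨h, h'⟩ | h
    · right; exact ⟨by simpa using h, by simpa [h] using h'⟩
    · left; simpa using h
  · exact absurd hab (fg_adj_rr AA _ _)

/-! ### Gluing a rooted structure at an element -/

/-- The embedding of the glued structure. -/
def gmap {T U : Type} (x : T) (t : U) : U → T ⊕ {y : U // y ≠ t} :=
  fun y => if h : y = t then Sum.inl x else Sum.inr ⟨y, h⟩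

lemma gmap_root {T U : Type} (x : T) (t : U) : gmap x t t = Sum.inl x := by simp [gmap]

lemma gmap_ne {T U : Type} (x : T) (t : U) (y : {y : U // y ≠ t}) :
    gmap x t y.1 = Sum.inr y := by simp [gmap, y.2]

lemma gmap_inj {T U : Type} (x : T) (t : U) : Function.Injective (gmap x t) := by
  intro y z h
  unfold gmap at h
  split_ifs at h with h1 h2 h2
  · rw [h1, h2]
  · simpa using h

lemma gmap_eq_inl {T U : Type} {x : T} {t : U} {y : U} {a : T} (h : gmap x t y = Sum.inl a) :
    y = t ∧ a = x := by
  unfold gmap at h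
  split_ifs at h with h1
  · exact ⟨h1, by simpa using h.symm⟩

/-- Glue `(UU, t)` to `TT` at `x`. -/
def glue {T U : Type} (TT : Struct σ ar T) (x : T) (UU : Struct σ ar U) (t : U) :
    Struct σ ar (T ⊕ {y : U // y ≠ t}) where
  rel R := {u | (∃ v ∈ TT.rel R, u = fun i => Sum.inl (v i)) ∨
                (∃ v ∈ UU.rel R, u = fun i => gmap x t (v i))}

lemma glue_rt {T U : Type} {TT : Struct σ ar T} {s x : T} {UU : Struct σ ar U} {t : U}
    (hT : RT TT s) (hU : RT UU t) : RT (glue TT x UU t) (Sum.inl s) := by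
  obtain ⟨r, a0, a1, a2, a3⟩ := hT
  obtain ⟨q, b0, b1, b2, b3⟩ := hU
  set ρ : T ⊕ {y : U // y ≠ t} → ℕ := Sum.elim r (fun y => r x + q y.1) with hρ
  have hl : ∀ a, ρ (Sum.inl a) = r a := fun a => rfl
  have hg : ∀ y, ρ (gmap x t y) = r x + q y := by
    intro y
    unfold gmap
    split_ifs with h
    · simp [hρ, h, b0]
    · simp [hρ]
  refine ⟨ρ, a0, ?_, ?_, ?_⟩
  · rintro ⟨R, u, ⟨v, hv, rfl⟩ | ⟨v, hv, rfl⟩⟩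
    · obtain ⟨i, hi⟩ := a1 ⟨R, v, hv⟩
      refine ⟨i, fun j => ?_⟩
      rcases hi j with h | h
      · left; exact congrArg Sum.inl h
      · right; exact h
    · obtain ⟨i, hi⟩ := b1 ⟨R, v, hv⟩
      refine ⟨i, fun j => ?_⟩
      rcases hi j with h | h
      · left; exact congrArg (gmap x t) h
      · right
        simp only [hg]
        exact Nat.add_lt_add_left h _
  · rintro (a | y) hne
    · obtain ⟨⟨R, v, hv⟩, i, j, h1, h2⟩ := a2 a (by simpa using hne)
      exact ⟨⟨R, fun i => Sum.inl (v i), Or.inl ⟨v, hv, rfl⟩⟩, i, j, congrArg Sum.inl h1, h2⟩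
    · obtain ⟨⟨R, v, hv⟩, i, j, h1, h2⟩ := b2 y.1 y.2
      refine ⟨⟨R, fun i => gmap x t (v i), Or.inr ⟨v, hv, rfl⟩⟩, i, j, ?_, ?_⟩
      · exact (congrArg (gmap x t) h1).trans (gmap_ne x t y)
      · rw [← gmap_ne x t y, hg]
        simp only [hg]
        exact Nat.add_lt_add_left h2 _
  · rintro ⟨R, u, ⟨v, hv, rfl⟩ | ⟨v, hv, rfl⟩⟩ ⟨R', u', ⟨v', hv', rfl⟩ | ⟨v', hv', rfl⟩⟩ i j i' j' he h1 h2
    · have := a3 ⟨R, v, hv⟩ ⟨R', v', hv'⟩ i j i' j' (Sum.inl_injective he) h1 h2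
      cases this; rfl
    · obtain ⟨e1, e2⟩ := gmap_eq_inl he.symm
      simp only [hg, e1, b0] at h2
      omega
    · obtain ⟨e1, e2⟩ := gmap_eq_inl he
      simp only [hg, e1, b0] at h1
      omega
    · simp only [hg] at h1 h2
      have := b3 ⟨R, v, hv⟩ ⟨R', v', hv'⟩ i j i' j' (gmap_inj x t he)
        (Nat.lt_of_add_lt_add_left h1) (Nat.lt_of_add_lt_add_left h2)
      cases this; rfl

lemma glue_isHom {T U D : Type} {TT : Struct σ ar T} {x : T} {UU : Struct σ ar U} {t : U}
    {DD : Struct σ ar D} (h : T ⊕ {y : U // y ≠ t} → D) :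
    IsHom (glue TT x UU t) DD h ↔
      IsHom TT DD (fun a => h (Sum.inl a)) ∧ IsHom UU DD (fun y => h (gmap x t y)) := by
  constructor
  · intro H
    exact ⟨fun R u hu => H R _ (Or.inl ⟨u, hu, rfl⟩), fun R u hu => H R _ (Or.inr ⟨u, hu, rfl⟩)⟩
  · rintro ⟨H1, H2⟩ R u (⟨v, hv, rfl⟩ | ⟨v, hv, rfl⟩)
    · exact H1 R v hv
    · exact H2 R v hv

/-- Homomorphisms of the glued structure. -/
def glueEquiv {T U D : Type} (TT : Struct σ ar T) (s x : T) (UU : Struct σ ar U) (t : U)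
    (DD : Struct σ ar D) (d : D) :
    {h : T ⊕ {y : U // y ≠ t} → D // IsHom (glue TT x UU t) DD h ∧ h (Sum.inl s) = d} ≃
      Σ h : {h : T → D // IsHom TT DD h ∧ h s = d},
        {g : U → D // IsHom UU DD g ∧ g t = h.1 x} where
  toFun h := ⟨⟨fun a => h.1 (Sum.inl a), ((glue_isHom h.1).1 h.2.1).1, h.2.2⟩,
    ⟨fun y => h.1 (gmap x t y), ((glue_isHom h.1).1 h.2.1).2, by simp [gmap_root]⟩⟩
  invFun p := ⟨Sum.elim p.1.1 (fun y => p.2.1 y.1), by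
    obtain ⟨⟨h, h1, h2⟩, ⟨g, g1, g2⟩⟩ := p
    refine ⟨(glue_isHom _).2 ⟨h1, ?_⟩, h2⟩
    have : (fun y => Sum.elim h (fun y : {y : U // y ≠ t} => g y.1) (gmap x t y)) = g := by
      funext y
      unfold gmap
      split_ifs with hy
      · rw [hy]; exact g2.symm
      · rfl
    rw [this]; exact g1⟩
  left_inv := by
    rintro ⟨h, h1⟩
    apply Subtype.ext
    funext z
    rcases z with a | y
    · rfl
    · simp [gmap_ne]
  right_inv := by
    rintro ⟨⟨h, h1, h2⟩, ⟨g, g1, g2⟩⟩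
    have : (fun y => Sum.elim h (fun y : {y : U // y ≠ t} => g y.1) (gmap x t y)) = g := by
      funext y
      unfold gmap
      split_ifs with hy
      · rw [hy]; exact g2.symm
      · rfl
    refine Sigma.ext rfl (heq_of_eq ?_)
    exact Subtype.ext this

/-- Weighted sum over homomorphisms. -/
def wsum {T D : Type} [Fintype T] [Fintype D] (DD : Struct σ ar D) (TT : Struct σ ar T) (t : T)
    (l : List (T × (D → ℚ))) (d : D) : ℚ :=
  ∑ h : {h : T → D // IsHom TT DD h ∧ h t = d}, (l.map fun p => p.2 (h.1 p.1)).prod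

/-- hom vectors -/
def hvec {D : Type} (DD : Struct σ ar D) (F : RootedFtree σ ar) : D → ℚ :=
  fun d => (degProfile DD d F : ℚ)

/-- The span of all hom vectors. -/
def HV {D : Type} (DD : Struct σ ar D) : Submodule ℚ (D → ℚ) :=
  Submodule.span ℚ (Set.range (hvec DD))

attribute [instance] RootedFtree.fin

/-- glued ftree -/
def gtree [Finite σ] (F : RootedFtree σ ar) (x : F.carrier) (G : RootedFtree σ ar) :
    RootedFtree σ ar where
  carrier := F.carrier ⊕ {y : G.carrier // y ≠ G.root}
  str := glue F.str x G.str G.root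
  isFtree := (glue_rt (F.isFtree.rt F.root) (G.isFtree.rt G.root)).isFtree
  root := Sum.inl F.root

lemma wsum_glue' {T U D : Type} [Fintype T] [Fintype U] [Fintype D] (DD : Struct σ ar D)
    (TT : Struct σ ar T) (s x : T) (UU : Struct σ ar U) (t : U) (l : List (T × (D → ℚ))) :
    wsum DD TT s ((x, fun d => (rhomCount UU t DD d : ℚ)) :: l) =
      wsum DD (glue TT x UU t) (Sum.inl s) (l.map fun p => (Sum.inl p.1, p.2)) := by
  funext d
  unfold wsum
  symm
  refine (@Fintype.sum_equiv _ _ _ (_) inferInstance _ (glueEquiv TT s x UU t DD d) _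
    (fun p => (l.map fun q => q.2 (p.1.1 q.1)).prod) ?_).trans ?_
  rotate_left
  · rw [Fintype.sum_sigma]
    refine Finset.sum_congr rfl fun h _ => ?_
    simp [rhomCount, Nat.card_eq_fintype_card]
  · intro h
    simp [glueEquiv, Function.comp_def]

lemma wsum_glue {D : Type} [Fintype D] [Finite σ] (DD : Struct σ ar D)
    (F : RootedFtree σ ar) (x : F.carrier) (G : RootedFtree σ ar) (l : List (F.carrier × (D → ℚ))) :
    wsum DD F.str F.root ((x, hvec DD G) :: l) =
      wsum DD (gtree F x G).str (gtree F x G).root (l.map fun p => (Sum.inl p.1, p.2)) :=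
  wsum_glue' DD F.str F.root x G.str G.root l

lemma wsum_mem {D : Type} [Fintype D] [Finite σ] (DD : Struct σ ar D) (n : ℕ) :
    ∀ (F : RootedFtree σ ar) (l : List (F.carrier × (D → ℚ))), l.length = n →
      (∀ p ∈ l, p.2 ∈ HV DD) → wsum DD F.str F.root l ∈ HV DD := by
  induction n with
  | zero =>
    intro F l hl _
    obtain rfl := List.length_eq_zero_iff.1 hl
    refine Submodule.subset_span ⟨F, ?_⟩
    funext d
    simp [wsum, hvec, degProfile, rhomCount, Nat.card_eq_fintype_card]
  | succ n ih =>
    intro F l hl hmem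
    match l, hl, hmem with
    | (x, w) :: l, hl, hmem =>
      have hl' : l.length = n := by simpa using hl
      have hw : w ∈ HV DD := hmem (x, w) (by simp)
      have hmem' : ∀ p ∈ l, p.2 ∈ HV DD := fun p hp => hmem p (by simp [hp])
      clear hmem hl
      unfold HV at hw
      induction hw using Submodule.span_induction with
      | mem w hw =>
        obtain ⟨G, rfl⟩ := hw
        rw [wsum_glue]
        apply ih
        · simpa using hl'
        · intro p hp
          obtain ⟨q, hq, rfl⟩ := List.mem_map.1 hp
          exact hmem' q hq
      | zero =>
        convert (HV DD).zero_mem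
        funext d
        simp [wsum]
      | add w w' _ _ h1 h2 =>
        convert (HV DD).add_mem h1 h2
        funext d
        simp [wsum, add_mul, Finset.sum_add_distrib]
      | smul c w _ h1 =>
        convert (HV DD).smul_mem c h1
        funext d
        simp [wsum, mul_assoc, Finset.mul_sum]

/-! ### The span of the hom vectors is an algebra containing indicators -/

/-- The one-element ftree. -/
def unitTree [Finite σ] : RootedFtree σ ar where
  carrier := Unit
  str := ⟨fun _ => ∅⟩
  isFtree := by
    refine RT.isFtree (t := ()) ⟨fun _ => 0, rfl, ?_, ?_, ?_⟩
    · rintro ⟨R, u, hu⟩; exact absurd hu (Set.notMem_empty _)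
    · intro a ha; exact absurd rfl ha
    · rintro ⟨R, u, hu⟩; exact absurd hu (Set.notMem_empty _)
  root := ()

lemma wsum_unit {D : Type} [Fintype D] [Finite σ] (DD : Struct σ ar D) (l : List (Unit × (D → ℚ)))
    (d : D) : wsum DD (⟨fun _ => ∅⟩ : Struct σ ar Unit) () l d = (l.map fun p => p.2 d).prod := by
  unfold wsum
  have hd : IsHom (⟨fun _ => ∅⟩ : Struct σ ar Unit) DD (fun _ => d) ∧ (fun _ : Unit => d) () = d :=
    ⟨fun R u hu => absurd hu (Set.notMem_empty _), rfl⟩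
  refine (Finset.sum_eq_single ⟨fun _ => d, hd⟩ ?_ ?_).trans rfl
  · rintro ⟨h, h1, h2⟩ _ hne
    exfalso
    apply hne
    apply Subtype.ext
    funext z
    exact h2
  · simp

lemma HV_one {D : Type} [Fintype D] [Finite σ] (DD : Struct σ ar D) : (1 : D → ℚ) ∈ HV DD := by
  have h := wsum_mem DD 0 unitTree [] rfl (by simp)
  convert h using 1
  funext d
  exact (wsum_unit DD [] d).symm

lemma HV_mul {D : Type} [Fintype D] [Finite σ] (DD : Struct σ ar D) {v w : D → ℚ}
    (hv : v ∈ HV DD) (hw : w ∈ HV DD) : v * w ∈ HV DD := by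
  have h := wsum_mem DD 2 unitTree [((), v), ((), w)] rfl (by
    intro p hp
    simp only [List.mem_cons, List.not_mem_nil, or_false] at hp
    rcases hp with rfl | rfl
    · exact hv
    · exact hw)
  convert h using 1
  funext d
  refine Eq.trans ?_ (wsum_unit DD [((), v), ((), w)] d).symm
  simp

lemma HV_prod {D ι : Type} [Fintype D] [Finite σ] (DD : Struct σ ar D) (s : Finset ι)
    (f : ι → D → ℚ) (hf : ∀ i ∈ s, f i ∈ HV DD) : ∏ i ∈ s, f i ∈ HV DD :=
  Finset.prod_induction f (· ∈ HV DD) (fun _ _ => HV_mul DD) (HV_one DD) hf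

lemma HV_inv {D : Type} (DD : Struct σ ar D) {v : D → ℚ} (hv : v ∈ HV DD) {d d' : D}
    (h : degProfile DD d = degProfile DD d') : v d = v d' := by
  unfold HV at hv
  induction hv using Submodule.span_induction with
  | mem w hw => obtain ⟨F, rfl⟩ := hw; simp [hvec, h]
  | zero => rfl
  | add w w' _ _ h1 h2 => simp [h1, h2]
  | smul c w _ h1 => simp [h1]

/-- indicator of a class -/
def ind {D : Type} (DD : Struct σ ar D) (i : RootedFtree σ ar → ℕ) : D → ℚ :=
  fun d => if degProfile DD d = i then 1 else 0

lemma ind_mem {D : Type} [Fintype D] [Finite σ] (DD : Struct σ ar D) (i : RootedFtree σ ar → ℕ) :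
    ind DD i ∈ HV DD := by
  by_cases hi : ∃ d, degProfile DD d = i
  · obtain ⟨d0, rfl⟩ := hi
    have : ∀ d, ∃ f ∈ HV DD, f d0 = 1 ∧ (degProfile DD d ≠ degProfile DD d0 → f d = 0) := by
      intro d
      by_cases h : degProfile DD d = degProfile DD d0
      · exact ⟨1, HV_one DD, rfl, fun h' => absurd h h'⟩
      · obtain ⟨F, hF⟩ := Function.ne_iff.1 h
        have hne : hvec DD F d0 - hvec DD F d ≠ 0 := by
          unfold hvec
          rw [sub_ne_zero]
          exact fun e => hF (Nat.cast_injective e).symm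
        refine ⟨(hvec DD F d0 - hvec DD F d)⁻¹ • (hvec DD F - (hvec DD F d) • 1), ?_, ?_, ?_⟩
        · exact Submodule.smul_mem _ _ (Submodule.sub_mem _ (Submodule.subset_span ⟨F, rfl⟩)
            (Submodule.smul_mem _ _ (HV_one DD)))
        · simp [inv_mul_cancel₀ hne]
        · intro _; simp
    choose f hf h1 h2 using this
    have hp := HV_prod DD Finset.univ f (fun d _ => hf d)
    convert hp using 1
    funext d
    unfold ind
    split_ifs with h
    · rw [HV_inv DD hp h]; simp [h1]
    · rw [Finset.prod_apply]
      exact (Finset.prod_eq_zero (f := fun c => f c d) (Finset.mem_univ d) (h2 d h)).symm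
  · convert (HV DD).zero_mem
    funext d
    unfold ind
    rw [if_neg (fun h => hi ⟨d, h⟩)]
    rfl

/-! ### A single constraint -/

/-- A single constraint with prescribed equalities. -/
def starStr (R : σ) (E : Set (Fin (ar R) × Fin (ar R))) :
    Struct σ ar (Quot fun s t => (s, t) ∈ E) where
  rel R' := {u | (⟨R', u⟩ : Σ R : σ, Fin (ar R) → Quot fun s t => (s, t) ∈ E) = ⟨R, Quot.mk _⟩}

lemma starStr_cons (R : σ) (E : Set (Fin (ar R) × Fin (ar R))) (c : Cons (starStr R E)) :
    c = ⟨R, Quot.mk _, rfl⟩ := by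
  obtain ⟨R', u, hu⟩ := c
  have hu' : (⟨R', u⟩ : Σ R : σ, Fin (ar R) → Quot fun s t => (s, t) ∈ E) = ⟨R, Quot.mk _⟩ := hu
  cases hu'
  rfl

/-- The star ftree. -/
def starTree [Finite σ] (R : σ) (E : Set (Fin (ar R) × Fin (ar R))) (s0 : Fin (ar R)) :
    RootedFtree σ ar where
  carrier := Quot fun s t => (s, t) ∈ E
  fin := Fintype.ofFinite _
  str := starStr R E
  isFtree := by
    refine RT.isFtree (t := Quot.mk _ s0) ⟨fun a => if a = Quot.mk _ s0 then 0 else 1, by simp,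
      ?_, ?_, ?_⟩
    · intro c
      obtain rfl := starStr_cons R E c
      refine ⟨s0, fun j => ?_⟩
      by_cases h : (Quot.mk (fun s t => (s, t) ∈ E) j) = Quot.mk _ s0
      · left; exact h
      · right; simp [h]
    · intro a ha
      obtain ⟨s, rfl⟩ := Quot.exists_rep a
      exact ⟨⟨R, Quot.mk _, rfl⟩, s, s0, rfl, by simp [ha]⟩
    · intro c c' _ _ _ _ _ _ _
      rw [starStr_cons R E c, starStr_cons R E c']
  root := Quot.mk _ s0

lemma starStr_isHom {D : Type} (DD : Struct σ ar D) (R : σ) (E : Set (Fin (ar R) × Fin (ar R)))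
    (h : (Quot fun s t => (s, t) ∈ E) → D) :
    IsHom (starStr R E) DD h ↔ (fun s => h (Quot.mk _ s)) ∈ DD.rel R := by
  constructor
  · intro H; exact H R _ rfl
  · intro H R' u hu
    have hu' : (⟨R', u⟩ : Σ R : σ, Fin (ar R) → Quot fun s t => (s, t) ∈ E) = ⟨R, Quot.mk _⟩ := hu
    cases hu'
    exact H

/-- Number of tuples with at least the prescribed equalities. -/
def Nge {D : Type} (DD : Struct σ ar D) (R : σ) (g : Fin (ar R) → (RootedFtree σ ar → ℕ))
    (s0 : Fin (ar R)) (E : Set (Fin (ar R) × Fin (ar R))) (d : D) : ℕ :=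
  Nat.card {u : Fin (ar R) → D // (u ∈ DD.rel R ∧ u s0 = d ∧ ∀ s, degProfile DD (u s) = g s) ∧
    E ⊆ {p | u p.1 = u p.2}}

/-- Number of tuples with exactly the prescribed equalities. -/
def Neq {D : Type} (DD : Struct σ ar D) (R : σ) (g : Fin (ar R) → (RootedFtree σ ar → ℕ))
    (s0 : Fin (ar R)) (E : Set (Fin (ar R) × Fin (ar R))) (d : D) : ℕ :=
  Nat.card {u : Fin (ar R) → D // (u ∈ DD.rel R ∧ u s0 = d ∧ ∀ s, degProfile DD (u s) = g s) ∧
    {p | u p.1 = u p.2} = E}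

lemma wsum_star {D : Type} [Fintype D] (DD : Struct σ ar D) (R : σ)
    (g : Fin (ar R) → (RootedFtree σ ar → ℕ))
    (s0 : Fin (ar R)) (E : Set (Fin (ar R) × Fin (ar R))) (d : D)
    [Fintype (Quot fun s t => (s, t) ∈ E)] :
    wsum DD (starStr R E) (Quot.mk _ s0)
      ((Finset.univ : Finset (Fin (ar R))).toList.map fun s => (Quot.mk _ s, ind DD (g s))) d =
    Nge DD R g s0 E d := by
  unfold wsum
  have h1 : ∀ h : {h : (Quot fun s t => (s, t) ∈ E) → D //
        IsHom (starStr R E) DD h ∧ h (Quot.mk _ s0) = d},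
      ((((Finset.univ : Finset (Fin (ar R))).toList.map
        fun s => ((Quot.mk _ s : Quot fun s t => (s, t) ∈ E), ind DD (g s))).map
          fun p => p.2 (h.1 p.1)).prod : ℚ) =
        if ∀ s, degProfile DD (h.1 (Quot.mk _ s)) = g s then 1 else 0 := by
    intro h
    rw [List.map_map, Finset.prod_map_toList]
    simp only [Function.comp_def, ind, Finset.prod_boole, Finset.mem_univ, true_imp_iff]
  rw [Finset.sum_congr rfl fun h _ => h1 h, Finset.sum_boole]
  unfold Nge
  rw [← Fintype.card_subtype, ← Nat.card_eq_fintype_card]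
  congr 1
  refine Nat.card_congr
    { toFun := fun h => ⟨fun s => h.1.1 (Quot.mk _ s), ⟨(starStr_isHom DD R E _).1 h.1.2.1,
        h.1.2.2, h.2⟩, fun p hp => congrArg h.1.1 (Quot.sound hp)⟩
      invFun := fun u => ⟨⟨Quot.lift u.1 (fun a b hab => u.2.2 hab),
        (starStr_isHom DD R E _).2 u.2.1.1, u.2.1.2.1⟩, u.2.1.2.2⟩
      left_inv := ?_
      right_inv := ?_ }
  · rintro ⟨⟨h, _⟩, _⟩
    apply Subtype.ext
    apply Subtype.ext
    funext z
    obtain ⟨s, rfl⟩ := Quot.exists_rep z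
    rfl
  · rintro ⟨u, _⟩
    rfl

lemma Nge_inv {D : Type} [Fintype D] [Finite σ] (DD : Struct σ ar D) (R : σ)
    (g : Fin (ar R) → (RootedFtree σ ar → ℕ))
    (s0 : Fin (ar R)) (E : Set (Fin (ar R) × Fin (ar R))) {d d' : D}
    (h : degProfile DD d = degProfile DD d') : Nge DD R g s0 E d = Nge DD R g s0 E d' := by
  have hm := wsum_mem DD _ (starTree R E s0)
    ((Finset.univ : Finset (Fin (ar R))).toList.map fun s => (Quot.mk _ s, ind DD (g s))) rfl (by
      intro p hp
      obtain ⟨s, _, rfl⟩ := List.mem_map.1 hp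
      exact ind_mem DD _)
  have := HV_inv DD hm h
  have e := fun d => @wsum_star σ ar D _ DD R g s0 E d (Fintype.ofFinite _)
  have := ((e d).symm.trans this).trans (e d')
  exact_mod_cast this

/-- Splitting a count along the fibers of a map. -/
lemma card_fiber_sum {X L : Type} [Finite X] [Fintype L] (P : X → Prop) (f : X → L) :
    ∑ ℓ, Nat.card {x // P x ∧ f x = ℓ} = Nat.card {x // P x} := by
  have : Fintype X := Fintype.ofFinite X
  simp only [Nat.card_eq_fintype_card, Fintype.card_subtype]
  rw [Finset.card_eq_sum_card_fiberwise (f := f) (t := Finset.univ) (by intro x _; simp)]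
  refine Finset.sum_congr rfl fun ℓ _ => ?_
  rw [Finset.filter_filter]

lemma card_fiber_eq {X L : Type} [Finite X] [Fintype L] (P P' : X → Prop) (f f' : X → L) (ℓ0 : L)
    (htot : Nat.card {x // P x} = Nat.card {x // P' x})
    (h : ∀ ℓ, ℓ ≠ ℓ0 → Nat.card {x // P x ∧ f x = ℓ} = Nat.card {x // P' x ∧ f' x = ℓ}) :
    Nat.card {x // P x ∧ f x = ℓ0} = Nat.card {x // P' x ∧ f' x = ℓ0} := by
  rw [← card_fiber_sum P f, ← card_fiber_sum P' f',
    Fintype.sum_eq_add_sum_compl ℓ0, Fintype.sum_eq_add_sum_compl ℓ0] at htot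
  rw [Finset.sum_congr rfl (g := fun ℓ => Nat.card {x // P' x ∧ f' x = ℓ})] at htot
  · exact Nat.add_right_cancel htot
  · intro ℓ hℓ
    exact h ℓ (by simpa using hℓ)

lemma Neq_inv {D : Type} [Fintype D] [Finite σ] (DD : Struct σ ar D) (R : σ)
    (g : Fin (ar R) → (RootedFtree σ ar → ℕ))
    (s0 : Fin (ar R)) {d d' : D}
    (h : degProfile DD d = degProfile DD d') (E : Set (Fin (ar R) × Fin (ar R))) :
    Neq DD R g s0 E d = Neq DD R g s0 E d' := by
  induction E using WellFoundedGT.induction with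
  | ind E ih =>
    have hge := Nge_inv DD R g s0 E h
    unfold Nge at hge
    have : Fintype (Set (Fin (ar R) × Fin (ar R))) := Fintype.ofFinite _
    have key := card_fiber_eq _ _ (fun u : Fin (ar R) → D => {p | u p.1 = u p.2})
      (fun u : Fin (ar R) → D => {p | u p.1 = u p.2}) E hge ?_
    · unfold Neq
      have e : ∀ d, (fun u : Fin (ar R) → D =>
          (u ∈ DD.rel R ∧ u s0 = d ∧ ∀ s, degProfile DD (u s) = g s) ∧ {p | u p.1 = u p.2} = E) =
          (fun u : Fin (ar R) → D =>
          ((u ∈ DD.rel R ∧ u s0 = d ∧ ∀ s, degProfile DD (u s) = g s) ∧ E ⊆ {p | u p.1 = u p.2}) ∧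
           {p | u p.1 = u p.2} = E) := by
        intro d
        funext u
        apply propext
        constructor
        · rintro ⟨h1, h2⟩; exact ⟨⟨h1, h2.ge⟩, h2⟩
        · rintro ⟨⟨h1, _⟩, h2⟩; exact ⟨h1, h2⟩
      have e1 := congrArg (fun P : (Fin (ar R) → D) → Prop => Nat.card {u // P u}) (e d)
      have e2 := congrArg (fun P : (Fin (ar R) → D) → Prop => Nat.card {u // P u}) (e d')
      exact (e1.trans key).trans e2.symm
    · intro E' hE'
      by_cases hlt : E ⊆ E'
      · have := ih E' (lt_of_le_of_ne hlt (Ne.symm hE'))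
        unfold Neq at this
        have e : ∀ d, (fun u : Fin (ar R) → D =>
          (u ∈ DD.rel R ∧ u s0 = d ∧ ∀ s, degProfile DD (u s) = g s) ∧ {p | u p.1 = u p.2} = E') =
          (fun u : Fin (ar R) → D =>
          ((u ∈ DD.rel R ∧ u s0 = d ∧ ∀ s, degProfile DD (u s) = g s) ∧ E ⊆ {p | u p.1 = u p.2}) ∧
           {p | u p.1 = u p.2} = E') := by
          intro d
          funext u
          apply propext
          constructor
          · rintro ⟨h1, h2⟩; exact ⟨⟨h1, hlt.trans h2.ge⟩, h2⟩
          · rintro ⟨⟨h1, _⟩, h2⟩; exact ⟨h1, h2⟩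
        have e1 := congrArg (fun P : (Fin (ar R) → D) → Prop => Nat.card {u // P u}) (e d)
        have e2 := congrArg (fun P : (Fin (ar R) → D) → Prop => Nat.card {u // P u}) (e d')
        exact (e1.symm.trans this).trans e2
      · have e : ∀ d, IsEmpty {u : Fin (ar R) → D //
          ((u ∈ DD.rel R ∧ u s0 = d ∧ ∀ s, degProfile DD (u s) = g s) ∧ E ⊆ {p | u p.1 = u p.2}) ∧
           {p | u p.1 = u p.2} = E'} := by
          intro d
          refine ⟨?_⟩
          rintro ⟨u, ⟨_, h1⟩, h2⟩
          exact hlt (h2 ▸ h1)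
        have i1 := e d
        have i2 := e d'
        exact (Nat.card_of_isEmpty).trans (Nat.card_of_isEmpty).symm

/-! ### The partition is equitable -/

lemma q_iff {D : Type} (DD : Struct σ ar D) (R : σ) (u : Fin (ar R) → D) (hu : u ∈ DD.rel R)
    (E : Set (Fin (ar R) × Fin (ar R))) (g : Fin (ar R) → (RootedFtree σ ar → ℕ)) :
    qProfile DD ⟨R, u, hu⟩ = ⟨R, E, g⟩ ↔
      {p | u p.1 = u p.2} = E ∧ ∀ s, degProfile DD (u s) = g s := by
  unfold qProfile
  constructor
  · intro h
    have h' := eq_of_heq (Sigma.mk.inj h).2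
    exact ⟨(Prod.mk.inj h').1, fun s => congrFun (Prod.mk.inj h').2 s⟩
  · rintro ⟨h1, h2⟩
    have h3 : (fun s => degProfile DD (u s)) = g := funext h2
    subst h1 h3
    rfl

lemma lab_iff {D : Type} (DD : Struct σ ar D) (a : D) (R : σ) (u : Fin (ar R) → D)
    (hu : u ∈ DD.rel R) (S : Finset (Fin (ar R))) :
    lab DD a ⟨R, u, hu⟩ = ⟨R, S⟩ ↔ ∀ s, u s = a ↔ s ∈ S := by
  unfold lab
  constructor
  · intro h s
    have h' := eq_of_heq (Sigma.mk.inj h).2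
    rw [← h']
    simp
  · intro h
    have : S = Finset.univ.filter fun i => u i = a := by
      ext s; simp [h s]
    subst this
    rfl

lemma cons_count {D : Type} (DD : Struct σ ar D) (a : D) (R : σ) (S : Finset (Fin (ar R)))
    (s0 : Fin (ar R)) (hs : s0 ∈ S)
    (E : Set (Fin (ar R) × Fin (ar R))) (g : Fin (ar R) → (RootedFtree σ ar → ℕ)) :
    Nat.card {c : Cons DD // qProfile DD c = ⟨R, E, g⟩ ∧ lab DD a c = ⟨R, S⟩} =
      if ∀ s, s ∈ S ↔ (s, s0) ∈ E then Neq DD R g s0 E a else 0 := by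
  split_ifs with hSE
  · symm
    unfold Neq
    refine Nat.card_eq_of_bijective (fun u => ⟨⟨R, u.1, u.2.1.1⟩, ?_, ?_⟩) ⟨?_, ?_⟩
    · exact (q_iff DD R _ _ E g).2 ⟨u.2.2, u.2.1.2.2⟩
    · refine (lab_iff DD a R _ _ S).2 fun s => ?_
      have k : u.1 s = u.1 s0 ↔ (s, s0) ∈ E := Set.ext_iff.1 u.2.2 (s, s0)
      have k0 : u.1 s0 = a := u.2.1.2.1
      rw [hSE, ← k, k0]
    · rintro ⟨u, hu⟩ ⟨v, hv⟩ h
      have h1 := congrArg Subtype.val h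
      have h2 := eq_of_heq (Sigma.mk.inj h1).2
      have h3 := congrArg Subtype.val h2
      exact Subtype.ext h3
    · rintro ⟨⟨R', u, hu⟩, h1, h2⟩
      obtain rfl : R' = R := congrArg Sigma.fst h1
      have h1' := (q_iff DD _ _ _ E g).1 h1
      have h2' := (lab_iff DD a _ _ _ S).1 h2
      exact ⟨⟨u, ⟨hu, (h2' s0).2 hs, h1'.2⟩, h1'.1⟩, rfl⟩
  · have : IsEmpty {c : Cons DD // qProfile DD c = ⟨R, E, g⟩ ∧ lab DD a c = ⟨R, S⟩} := by
      refine ⟨?_⟩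
      rintro ⟨⟨R', u, hu⟩, h1, h2⟩
      obtain rfl : R' = R := congrArg Sigma.fst h1
      have h1' := (q_iff DD _ _ _ E g).1 h1
      have h2' := (lab_iff DD a _ _ _ S).1 h2
      apply hSE
      intro s
      rw [← h1'.1, Set.mem_setOf_eq, (h2' s0).2 hs, h2']
    exact Nat.card_of_isEmpty

lemma c_inv {D : Type} [Fintype σ] [Fintype D] (DD : Struct σ ar D) {a a' : D}
    (h : degProfile DD a = degProfile DD a') (ℓ : Label σ ar)
    (j : Σ R : σ, Set (Fin (ar R) × Fin (ar R)) × (Fin (ar R) → (RootedFtree σ ar → ℕ))) :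
    Nat.card {c : Cons DD // qProfile DD c = j ∧ lab DD a c = ℓ} =
      Nat.card {c : Cons DD // qProfile DD c = j ∧ lab DD a' c = ℓ} := by
  have hne : ∀ ℓ : Label σ ar, ℓ.1 ≠ j.1 →
      Nat.card {c : Cons DD // qProfile DD c = j ∧ lab DD a c = ℓ} =
      Nat.card {c : Cons DD // qProfile DD c = j ∧ lab DD a' c = ℓ} := by
    intro ℓ hℓ
    have e : ∀ a, IsEmpty {c : Cons DD // qProfile DD c = j ∧ lab DD a c = ℓ} := by
      refine fun a => ⟨?_⟩
      rintro ⟨c, h1, h2⟩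
      exact hℓ (by rw [← h1, ← h2]; rfl)
    have i1 := e a
    have i2 := e a'
    exact (Nat.card_of_isEmpty).trans (Nat.card_of_isEmpty).symm
  have hS : ∀ ℓ : Label σ ar, ℓ.2.Nonempty →
      Nat.card {c : Cons DD // qProfile DD c = j ∧ lab DD a c = ℓ} =
      Nat.card {c : Cons DD // qProfile DD c = j ∧ lab DD a' c = ℓ} := by
    rintro ℓ ⟨s0, hs⟩
    by_cases hℓ : ℓ.1 = j.1
    · obtain ⟨R, S⟩ := ℓ
      obtain ⟨R', E, g⟩ := j
      obtain rfl : R = R' := hℓ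
      rw [cons_count DD a R S s0 hs, cons_count DD a' R S s0 hs, Neq_inv DD R g s0 h]
    · exact hne ℓ hℓ
  by_cases hℓ : ℓ.1 = j.1
  · by_cases hn : ℓ.2.Nonempty
    · exact hS ℓ hn
    · refine card_fiber_eq (fun c => qProfile DD c = j) (fun c => qProfile DD c = j)
        (lab DD a) (lab DD a') ℓ rfl ?_
      intro ℓ' hℓ'
      by_cases h1 : ℓ'.1 = j.1
      · by_cases h2 : ℓ'.2.Nonempty
        · exact hS ℓ' h2
        · exfalso
          apply hℓ'
          obtain ⟨R, S⟩ := ℓ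
          obtain ⟨R', S'⟩ := ℓ'
          obtain rfl : R' = R := h1.trans hℓ.symm
          rw [Finset.not_nonempty_iff_eq_empty] at hn h2
          exact congrArg _ (h2.trans hn.symm)
      · exact hne ℓ' h1
  · exact hne ℓ hℓ

lemma d_inv {D : Type} [Fintype σ] [Fintype D] (DD : Struct σ ar D) {c c' : Cons DD}
    (h : qProfile DD c = qProfile DD c') (ℓ : Label σ ar) (i : RootedFtree σ ar → ℕ) :
    Nat.card {a : D // degProfile DD a = i ∧ lab DD a c = ℓ} =
      Nat.card {a : D // degProfile DD a = i ∧ lab DD a c' = ℓ} := by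
  obtain ⟨R, u, hu⟩ := c
  obtain ⟨R', u', hu'⟩ := c'
  obtain rfl : R = R' := congrArg Sigma.fst h
  obtain ⟨hE, hg⟩ := (q_iff DD R u hu _ _).1 h
  have hE' : ∀ s s', u s = u s' ↔ u' s = u' s' := fun s s' => by
    have := Set.ext_iff.1 hE (s, s')
    simpa using this
  have hne : ∀ ℓ : Label σ ar, ℓ.1 ≠ R →
      Nat.card {a : D // degProfile DD a = i ∧ lab DD a ⟨R, u, hu⟩ = ℓ} =
      Nat.card {a : D // degProfile DD a = i ∧ lab DD a ⟨R, u', hu'⟩ = ℓ} := by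
    intro ℓ hℓ
    have e : ∀ c : Cons DD, c.1 = R → IsEmpty {a : D // degProfile DD a = i ∧ lab DD a c = ℓ} := by
      refine fun c hc => ⟨?_⟩
      rintro ⟨a, h1, h2⟩
      exact hℓ (by rw [← hc, ← h2]; rfl)
    have i1 := e ⟨R, u, hu⟩ rfl
    have i2 := e ⟨R, u', hu'⟩ rfl
    exact (Nat.card_of_isEmpty).trans (Nat.card_of_isEmpty).symm
  have hS : ∀ ℓ : Label σ ar, ℓ.2.Nonempty →
      Nat.card {a : D // degProfile DD a = i ∧ lab DD a ⟨R, u, hu⟩ = ℓ} =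
      Nat.card {a : D // degProfile DD a = i ∧ lab DD a ⟨R, u', hu'⟩ = ℓ} := by
    rintro ℓ ⟨s0, hs⟩
    by_cases hℓ : ℓ.1 = R
    · obtain ⟨R', S⟩ := ℓ
      obtain rfl : R' = R := hℓ
      have hg0 : degProfile DD (u s0) = degProfile DD (u' s0) := hg s0
      refine Nat.card_congr
        { toFun := fun a => ⟨u' s0, ?_, ?_⟩
          invFun := fun a => ⟨u s0, ?_, ?_⟩
          left_inv := ?_
          right_inv := ?_ }
      · rw [← hg0, ((lab_iff DD a.1 _ u hu S).1 a.2.2 s0).2 hs]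
        exact a.2.1
      · have k := (lab_iff DD a.1 _ u hu S).1 a.2.2
        refine (lab_iff DD _ _ u' hu' S).2 fun s => ?_
        rw [← hE', (k s0).2 hs, k]
      · rw [hg0, ((lab_iff DD a.1 _ u' hu' S).1 a.2.2 s0).2 hs]
        exact a.2.1
      · have k := (lab_iff DD a.1 _ u' hu' S).1 a.2.2
        refine (lab_iff DD _ _ u hu S).2 fun s => ?_
        rw [hE', (k s0).2 hs, k]
      · intro a
        exact Subtype.ext (((lab_iff DD a.1 _ u hu S).1 a.2.2 s0).2 hs)
      · intro a
        exact Subtype.ext (((lab_iff DD a.1 _ u' hu' S).1 a.2.2 s0).2 hs)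
    · exact hne ℓ hℓ
  by_cases hℓ : ℓ.1 = R
  · by_cases hn : ℓ.2.Nonempty
    · exact hS ℓ hn
    · refine card_fiber_eq (fun a => degProfile DD a = i) (fun a => degProfile DD a = i)
        (fun a => lab DD a ⟨R, u, hu⟩) (fun a => lab DD a ⟨R, u', hu'⟩) ℓ rfl ?_
      intro ℓ' hℓ'
      by_cases h1 : ℓ'.1 = R
      · by_cases h2 : ℓ'.2.Nonempty
        · exact hS ℓ' h2
        · exfalso
          apply hℓ'
          obtain ⟨R, S⟩ := ℓ
          obtain ⟨R', S'⟩ := ℓ'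
          obtain rfl : R' = R := h1.trans hℓ.symm
          rw [Finset.not_nonempty_iff_eq_empty] at hn h2
          exact congrArg _ (h2.trans hn.symm)
      · exact hne ℓ' h1
  · exact hne ℓ hℓ

lemma exists_param {X L I J : Type*} (p : X → I) (F : X → L → J → ℕ)
    (h : ∀ x x', p x = p x' → ∀ l j, F x l j = F x' l j) :
    ∃ c : L → I → J → ℕ, ∀ x l j, F x l j = c l (p x) j := by
  refine ⟨fun l i j => if h : ∃ x, p x = i then F h.choose l j else 0, fun x l j => ?_⟩
  have hx : ∃ y, p y = p x := ⟨x, rfl⟩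
  dsimp only
  rw [dif_pos hx]
  exact h _ _ hx.choose_spec.symm l j

theorem stmt16 [Fintype σ] {D : Type} [Fintype D] (DD : Struct σ ar D) :
    ∃ (cpar : Label σ ar → (RootedFtree σ ar → ℕ) →
        (Σ R : σ, Set (Fin (ar R) × Fin (ar R)) × (Fin (ar R) → (RootedFtree σ ar → ℕ))) → ℕ)
      (dpar : Label σ ar →
        (Σ R : σ, Set (Fin (ar R) × Fin (ar R)) × (Fin (ar R) → (RootedFtree σ ar → ℕ))) →
        (RootedFtree σ ar → ℕ) → ℕ),
      IsEquitable DD (degProfile DD) (qProfile DD) cpar dpar := by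
  obtain ⟨cpar, hc⟩ := exists_param (degProfile DD)
    (fun a ℓ j => Nat.card {c : Cons DD // qProfile DD c = j ∧ lab DD a c = ℓ})
    (fun _ _ h ℓ j => c_inv DD h ℓ j)
  obtain ⟨dpar, hd⟩ := exists_param (qProfile DD)
    (fun c ℓ i => Nat.card {a : D // degProfile DD a = i ∧ lab DD a c = ℓ})
    (fun _ _ h ℓ i => d_inv DD h ℓ i)
  exact ⟨cpar, dpar, hc, hd⟩

end
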